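/- Let A be a unital C*-algebra, B ⊆ A a unital C*-subalgebra, X a selfadjoint element of A, η : A → B a continuous positive linear map, and q ∈ B strictly positive. For each selfadjoint u ∈ B let v_q(u) denote the unique strictly positive solution of v = q + η(((X−u)v⁻¹(X−u)+v)⁻¹). Then the map u ↦ v_q(u) is norm-continuous on the set of selfadjoint elements of B and uniformly bounded: ‖v_q(u)‖ ≤ ‖q‖ + ‖η‖·‖q⁻¹‖ for every selfadjoint u ∈ B. -/

import Mathlib

noncomputable section

open Filter Topology
open scoped ComplexOrder

/-- The real part `(b + b*)/2` of an element of a complex star algebra. -/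
def reP {A : Type*} [NonUnitalRing A] [StarRing A] [Module ℂ A] (b : A) : A :=
  (2 : ℂ)⁻¹ • (b + star b)

/-- The imaginary part `(b - b*)/(2i)` of an element of a complex star algebra. -/
def imP {A : Type*} [NonUnitalRing A] [StarRing A] [Module ℂ A] (b : A) : A :=
  (2 * Complex.I)⁻¹ • (b - star b)

/-- An element of a C*-algebra is strictly positive if it is selfadjoint, positive
(with respect to the canonical order coming from the star-ordered ring structure)
and invertible. -/
def SPos {A : Type*} [Ring A] [StarRing A] [PartialOrder A] (v : A) : Prop :=
  IsSelfAdjoint v ∧ 0 ≤ v ∧ IsUnit v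

/-! With `Y = X - u` the equation reads `v = q + η ((Y v⁻¹ Y + v)⁻¹)`. Both `v ↦ v⁻¹` and positive
linear maps do not increase Thompson's metric on the cone of strictly positive elements, in which
`v` and `w` have distance at most `log t` when `v ≤ t w` and `w ≤ t v`. Since `η ((Y v⁻¹ Y + v)⁻¹)`
is dominated by a multiple `M q` of `q`, adding `q` afterwards turns this into a strict contraction
`t ↦ (1 + t M) / (1 + M)` whose rate does not depend on `Y`. Comparing a solution with its image
under the map of a nearby parameter then bounds its distance to the solution there. -/

open scoped Ring

section OrderedModule

variable {E : Type*} [AddCommGroup E] [PartialOrder E] [Module ℝ E]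

/-- The elements `v` and `w` of an ordered vector space are at Thompson distance at most `log t`.
The ratio `t` is recorded rather than its logarithm, so that distances compose multiplicatively. -/
def ThompsonClose (t : ℝ) (v w : E) : Prop :=
  v ≤ t • w ∧ w ≤ t • v

namespace ThompsonClose

variable {s t : ℝ} {v w x : E}

lemma trans [PosSMulMono ℝ E] (hs : 0 ≤ s) (ht : 0 ≤ t) (h : ThompsonClose s v w)
    (h' : ThompsonClose t w x) : ThompsonClose (s * t) v x := by
  constructor
  · calc v ≤ s • w := h.1
      _ ≤ s • t • x := smul_le_smul_of_nonneg_left h'.1 hs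
      _ = (s * t) • x := smul_smul s t x
  · calc x ≤ t • w := h'.2
      _ ≤ t • s • v := smul_le_smul_of_nonneg_left h.2 ht
      _ = (s * t) • v := by rw [smul_smul, mul_comm]

lemma mono [SMulPosMono ℝ E] (hv : 0 ≤ v) (hw : 0 ≤ w) (hst : s ≤ t)
    (h : ThompsonClose s v w) : ThompsonClose t v w :=
  ⟨h.1.trans (smul_le_smul_of_nonneg_right hst hw),
    h.2.trans (smul_le_smul_of_nonneg_right hst hv)⟩

lemma add [IsOrderedAddMonoid E] {v' w' : E} (h : ThompsonClose t v w)
    (h' : ThompsonClose t v' w') : ThompsonClose t (v + v') (w + w') := by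
  simpa only [ThompsonClose, smul_add] using
    And.intro (add_le_add h.1 h'.1) (add_le_add h.2 h'.2)

lemma map {R F : Type*} [Semiring R] [Module R E] [AddCommGroup F] [PartialOrder F] [Module R F]
    [Module ℝ F] [LinearMap.CompatibleSMul E F ℝ R] {f : E →ₗ[R] F} (hf : Monotone f)
    (h : ThompsonClose t v w) : ThompsonClose t (f v) (f w) := by
  simpa only [ThompsonClose, f.map_smul_of_tower] using And.intro (hf h.1) (hf h.2)

end ThompsonClose

variable {t M : ℝ}

lemma add_le_smul_add_of_le_smul [IsOrderedAddMonoid E] [PosSMulMono ℝ E] {q v w : E}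
    (ht : 1 ≤ t) (hM : 0 ≤ M) (h : v ≤ t • w) (hw : w ≤ M • q) :
    q + v ≤ ((1 + t * M) / (1 + M)) • (q + w) := by
  have h_slack : ((t - 1) / (1 + M)) • w ≤ ((t - 1) / (1 + M)) • M • q :=
    smul_le_smul_of_nonneg_left hw (div_nonneg (sub_nonneg.2 ht) (by positivity))
  calc q + v ≤ q + t • w := by gcongr
    _ ≤ (q + t • w) + (((t - 1) / (1 + M)) • M • q - ((t - 1) / (1 + M)) • w) :=
        le_add_of_nonneg_right (sub_nonneg.2 h_slack)
    _ = ((1 + t * M) / (1 + M)) • (q + w) := by match_scalars <;> field_simp <;> ring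

namespace ThompsonClose

lemma const_add [IsOrderedAddMonoid E] [PosSMulMono ℝ E] {q v w : E} (ht : 1 ≤ t) (hM : 0 ≤ M)
    (hv : v ≤ M • q) (hw : w ≤ M • q) (h : ThompsonClose t v w) :
    ThompsonClose ((1 + t * M) / (1 + M)) (q + v) (q + w) :=
  ⟨add_le_smul_add_of_le_smul ht hM h.1 hw, add_le_smul_add_of_le_smul ht hM h.2 hv⟩

/- `(1 + δ) / (1 - δ * M)` is the fixed point of the affine map
`t ↦ (1 + δ) * ((1 + t * M) / (1 + M))`, so the least ratio `t` of `v` and `w` cannot exceed it. -/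
lemma of_contraction [SMulPosMono ℝ E] [TopologicalSpace E] [OrderClosedTopology E]
    [ContinuousSMul ℝ E] {δ : ℝ} {v w : E} (hv : 0 ≤ v) (hw : 0 ≤ w) (hM : 0 ≤ M) (hδ : 0 ≤ δ)
    (hδM : δ * M < 1) (h_ne : ∃ t, 1 ≤ t ∧ ThompsonClose t v w)
    (h_contr : ∀ t, 1 ≤ t → ThompsonClose t v w →
      ThompsonClose ((1 + δ) * ((1 + t * M) / (1 + M))) v w) :
    ThompsonClose ((1 + δ) / (1 - δ * M)) v w := by
  let S : Set ℝ := {t | 1 ≤ t ∧ ThompsonClose t v w}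
  have h_closed : IsClosed S :=
    (isClosed_le continuous_const continuous_id).inter
      ((isClosed_le continuous_const (by fun_prop)).inter
        (isClosed_le continuous_const (by fun_prop)))
  have h_bdd : BddBelow S := ⟨1, fun _ ht ↦ ht.1⟩
  obtain ⟨ht, h_close⟩ : sInf S ∈ S := h_closed.csInf_mem h_ne h_bdd
  set t := sInf S
  have hM' : 0 < 1 + M := by positivity
  have h_ratio : 1 ≤ (1 + t * M) / (1 + M) := by
    rw [one_le_div hM']
    gcongr
    exact le_mul_of_one_le_left hM ht
  have h_min : t ≤ (1 + δ) * ((1 + t * M) / (1 + M)) :=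
    csInf_le h_bdd ⟨one_le_mul_of_one_le_of_one_le (le_add_of_nonneg_right hδ) h_ratio,
      h_contr t ht h_close⟩
  refine h_close.mono hv hw ?_
  rw [← mul_div_assoc, le_div_iff₀ hM'] at h_min
  rw [le_div_iff₀ (sub_pos.2 hδM)]
  linarith

end ThompsonClose

end OrderedModule

section RingInverse

lemma map_ringInverse_of_isUnit {M N F : Type*} [MonoidWithZero M] [MonoidWithZero N]
    [FunLike F M N] [MonoidHomClass F M N] (f : F) {a : M} (ha : IsUnit a) :
    f a⁻¹ʳ = (f a)⁻¹ʳ := by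
  rw [← mul_one (f a)⁻¹ʳ, eq_comm, Ring.inverse_mul_eq_iff_eq_mul _ _ _ (ha.map f), ← map_mul,
    Ring.mul_inverse_cancel a ha, map_one]

lemma ringInverse_smul_of_isUnit {K R : Type*} [Semifield K] [Semiring R] [Algebra K R] {r : K}
    (hr : r ≠ 0) {a : R} (ha : IsUnit a) : (r • a)⁻¹ʳ = r⁻¹ • a⁻¹ʳ := by
  have h_unit : IsUnit (r • a) := ha.smul (Units.mk0 r hr)
  rw [← mul_one (r • a)⁻¹ʳ, Ring.inverse_mul_eq_iff_eq_mul _ _ _ h_unit, smul_mul_smul_comm,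
    mul_inv_cancel₀ hr, one_smul, Ring.mul_inverse_cancel a ha]

end RingInverse

section CStarAlgebra

variable {A : Type*} [CStarAlgebra A] [PartialOrder A] [StarOrderedRing A]

lemma sPos_iff_isStrictlyPositive {v : A} : SPos v ↔ IsStrictlyPositive v :=
  ⟨fun h ↦ ⟨h.2.1, h.2.2⟩, fun h ↦ ⟨h.isSelfAdjoint, h.nonneg, h.isUnit⟩⟩

lemma ringInverse_le_smul_ringInverse {v w : A} {t : ℝ} (ht : 0 < t) (hv : IsStrictlyPositive v)
    (hw : IsStrictlyPositive w) (h : v ≤ t • w) : w⁻¹ʳ ≤ t • v⁻¹ʳ := by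
  rw [← inv_smul_le_iff_of_pos ht, ← ringInverse_smul_of_isUnit ht.ne' hw.isUnit]
  exact CStarAlgebra.ringInverse_le_ringInverse h hv

lemma norm_ringInverse_le_of_le {q v : A} (hq : IsStrictlyPositive q) (hqv : q ≤ v) :
    ‖v⁻¹ʳ‖ ≤ ‖q⁻¹ʳ‖ :=
  CStarAlgebra.norm_le_norm_of_nonneg_of_le (hq.of_le hqv).ringInverse.nonneg
    (CStarAlgebra.ringInverse_le_ringInverse hqv hq)

lemma le_norm_smul_one {a : A} (ha : IsSelfAdjoint a) : a ≤ ‖a‖ • (1 : A) := by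
  simpa only [Algebra.algebraMap_eq_smul_one] using ha.le_algebraMap_norm_self

lemma one_le_norm_ringInverse_smul {q : A} (hq : IsStrictlyPositive q) : 1 ≤ ‖q⁻¹ʳ‖ • q := by
  nontriviality A
  have h_pos : 0 < ‖q⁻¹ʳ‖ := norm_pos_iff.2 hq.ringInverse.isUnit.ne_zero
  have h := ringInverse_le_smul_ringInverse h_pos hq.ringInverse isStrictlyPositive_one
    (le_norm_smul_one hq.ringInverse.isSelfAdjoint)
  rwa [Ring.inverse_one, Ring.inverse_inverse hq.isUnit] at h

lemma le_norm_mul_norm_ringInverse_smul {a q : A} (ha : IsSelfAdjoint a)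
    (hq : IsStrictlyPositive q) : a ≤ (‖a‖ * ‖q⁻¹ʳ‖) • q :=
  calc a ≤ ‖a‖ • (1 : A) := le_norm_smul_one ha
    _ ≤ ‖a‖ • ‖q⁻¹ʳ‖ • q :=
        smul_le_smul_of_nonneg_left (one_le_norm_ringInverse_smul hq) (norm_nonneg a)
    _ = (‖a‖ * ‖q⁻¹ʳ‖) • q := smul_smul _ _ _

lemma norm_sub_le_of_sub_le_smul_one {v w : A} {r : ℝ} (hv : IsSelfAdjoint v)
    (hw : IsSelfAdjoint w) (hr : 0 ≤ r) (h : v - w ≤ r • (1 : A)) (h' : w - v ≤ r • (1 : A)) :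
    ‖v - w‖ ≤ r := by
  obtain _ | _ := subsingleton_or_nontrivial A
  · rwa [Subsingleton.elim (v - w) 0, norm_zero]
  have h_sa : IsSelfAdjoint (v - w) := hv.sub hw
  have h_lower : algebraMap ℝ A (-r) ≤ v - w := by
    rwa [map_neg, Algebra.algebraMap_eq_smul_one, neg_le, neg_sub]
  rw [← Algebra.algebraMap_eq_smul_one, le_algebraMap_iff_spectrum_le h_sa] at h
  rw [algebraMap_le_iff_le_spectrum h_sa] at h_lower
  rcases CStarAlgebra.norm_or_neg_norm_mem_spectrum h_sa with h_mem | h_mem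
  · exact h _ h_mem
  · exact neg_le_neg_iff.1 (h_lower _ h_mem)

namespace ThompsonClose

variable {t : ℝ} {v w : A}

lemma ringInverse (ht : 0 < t) (hv : IsStrictlyPositive v) (hw : IsStrictlyPositive w)
    (h : ThompsonClose t v w) : ThompsonClose t v⁻¹ʳ w⁻¹ʳ :=
  ⟨ringInverse_le_smul_ringInverse ht hw hv h.2, ringInverse_le_smul_ringInverse ht hv hw h.1⟩

lemma conjugate {Y : A} (hY : IsSelfAdjoint Y) (h : ThompsonClose t v w) :
    ThompsonClose t (Y * v * Y) (Y * w * Y) := by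
  simpa only [ThompsonClose, mul_smul_comm, smul_mul_assoc] using
    And.intro (hY.conjugate_le_conjugate h.1) (hY.conjugate_le_conjugate h.2)

lemma of_le {q : A} (hq : IsStrictlyPositive q) (hv : q ≤ v) (hw : q ≤ w) :
    ThompsonClose (1 + ‖v - w‖ * ‖q⁻¹ʳ‖) v w := by
  have le_smul {v w : A} (hv : q ≤ v) (hw : q ≤ w) : v ≤ (1 + ‖v - w‖ * ‖q⁻¹ʳ‖) • w := by
    have h_sa : IsSelfAdjoint (v - w) :=
      (hq.of_le hv).isSelfAdjoint.sub (hq.of_le hw).isSelfAdjoint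
    rw [add_smul, one_smul, ← sub_le_iff_le_add']
    calc v - w ≤ (‖v - w‖ * ‖w⁻¹ʳ‖) • w :=
          le_norm_mul_norm_ringInverse_smul h_sa (hq.of_le hw)
      _ ≤ (‖v - w‖ * ‖q⁻¹ʳ‖) • w := smul_le_smul_of_nonneg_right
          (mul_le_mul_of_nonneg_left (norm_ringInverse_le_of_le hq hw) (norm_nonneg _))
          (hq.of_le hw).nonneg
  exact ⟨le_smul hv hw, norm_sub_rev v w ▸ le_smul hw hv⟩

lemma norm_sub_le {K : ℝ} (hv : 0 ≤ v) (hw : 0 ≤ w) (ht : 1 ≤ t) (hvK : ‖v‖ ≤ K) (hwK : ‖w‖ ≤ K)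
    (h : ThompsonClose t v w) : ‖v - w‖ ≤ (t - 1) * K := by
  have h_sub {v w : A} (hw : 0 ≤ w) (hwK : ‖w‖ ≤ K) (h : v ≤ t • w) :
      v - w ≤ ((t - 1) * K) • (1 : A) :=
    calc v - w ≤ t • w - w := sub_le_sub_right h w
      _ = (t - 1) • w := by rw [sub_smul, one_smul]
      _ ≤ (t - 1) • K • (1 : A) := smul_le_smul_of_nonneg_left
          ((le_norm_smul_one (.of_nonneg hw)).trans (smul_le_smul_of_nonneg_right hwK zero_le_one))
          (sub_nonneg.2 ht)
      _ = ((t - 1) * K) • (1 : A) := smul_smul _ _ _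
  exact norm_sub_le_of_sub_le_smul_one (.of_nonneg hv) (.of_nonneg hw)
    (mul_nonneg (sub_nonneg.2 ht) ((norm_nonneg v).trans hvK)) (h_sub hw hwK h.1) (h_sub hv hvK h.2)

end ThompsonClose

end CStarAlgebra

section ImResolvent

/-- The imaginary part of the resolvent `(Y - i v)⁻¹`, for selfadjoint `Y` and strictly positive
`v`; it is the inverse of `(Y + i v) v⁻¹ (Y - i v) = Y v⁻¹ Y + v`. -/
def imResolvent {A : Type*} [Ring A] (Y v : A) : A :=
  (Y * v⁻¹ʳ * Y + v)⁻¹ʳ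

variable {A : Type*} [CStarAlgebra A] [PartialOrder A] [StarOrderedRing A] {Y v w : A}

lemma le_conjugate_ringInverse_add (hY : IsSelfAdjoint Y) (hv : IsStrictlyPositive v) :
    v ≤ Y * v⁻¹ʳ * Y + v :=
  le_add_of_nonneg_left (hY.conjugate_nonneg hv.ringInverse.nonneg)

lemma isStrictlyPositive_conjugate_ringInverse_add (hY : IsSelfAdjoint Y)
    (hv : IsStrictlyPositive v) : IsStrictlyPositive (Y * v⁻¹ʳ * Y + v) :=
  hv.of_le (le_conjugate_ringInverse_add hY hv)

lemma imResolvent_nonneg (hY : IsSelfAdjoint Y) (hv : IsStrictlyPositive v) :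
    0 ≤ imResolvent Y v :=
  (isStrictlyPositive_conjugate_ringInverse_add hY hv).ringInverse.nonneg

lemma norm_imResolvent_le (hY : IsSelfAdjoint Y) (hv : IsStrictlyPositive v) :
    ‖imResolvent Y v‖ ≤ ‖v⁻¹ʳ‖ :=
  norm_ringInverse_le_of_le hv (le_conjugate_ringInverse_add hY hv)

lemma ThompsonClose.imResolvent {t : ℝ} (hY : IsSelfAdjoint Y) (ht : 0 < t)
    (hv : IsStrictlyPositive v) (hw : IsStrictlyPositive w) (h : ThompsonClose t v w) :
    ThompsonClose t (imResolvent Y v) (imResolvent Y w) :=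
  (((h.ringInverse ht hv hw).conjugate hY).add h).ringInverse ht
    (isStrictlyPositive_conjugate_ringInverse_add hY hv)
    (isStrictlyPositive_conjugate_ringInverse_add hY hw)

lemma continuousAt_imResolvent (hY : IsSelfAdjoint Y) (hv : IsStrictlyPositive v) :
    ContinuousAt (fun Z ↦ imResolvent Z v) Y := by
  obtain ⟨a, ha⟩ := (isStrictlyPositive_conjugate_ringInverse_add hY hv).isUnit
  have h_inv : ContinuousAt Ring.inverse (Y * v⁻¹ʳ * Y + v) :=
    ha ▸ NormedRing.inverse_continuousAt a
  exact h_inv.comp (f := fun Z ↦ Z * v⁻¹ʳ * Z + v) (by fun_prop)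

end ImResolvent

lemma tendsto_one_add_div_one_sub_sub_one_mul {P : Type*} {l : Filter P} {δ : P → ℝ}
    (hδ : Tendsto δ l (𝓝 0)) (M K : ℝ) :
    Tendsto (fun p ↦ ((1 + δ p) / (1 - δ p * M) - 1) * K) l (𝓝 0) := by
  have h_num : Tendsto (fun p ↦ 1 + δ p) l (𝓝 1) := by
    simpa only [add_zero] using hδ.const_add 1
  have h_den : Tendsto (fun p ↦ 1 - δ p * M) l (𝓝 1) := by
    simpa only [zero_mul, sub_zero] using (hδ.mul_const M).const_sub 1
  simpa only [div_one, sub_self, zero_mul, Pi.div_apply] using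
    ((h_num.div h_den one_ne_zero).sub_const 1).mul_const K

section FixedPoint

variable {A B : Type*} [CStarAlgebra A] [CStarAlgebra B]

/-- The map `v ↦ q + η ((Y v⁻¹ Y + v)⁻¹)` on `B` whose strictly positive fixed points are sought. An
element of `B` is viewed in `A` through the homomorphism `ι`. -/
def fixedPointMap (ι : B →⋆ₐ[ℂ] A) (η : A →L[ℂ] B) (q : B) (Y : A) (v : B) : B :=
  q + η (imResolvent Y (ι v))

variable [PartialOrder A] [StarOrderedRing A] [PartialOrder B] [StarOrderedRing B]
  {ι : B →⋆ₐ[ℂ] A} {η : A →L[ℂ] B} {q v w : B} {Y : A}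

lemma isStrictlyPositive_map (ι : B →⋆ₐ[ℂ] A) (hv : IsStrictlyPositive v) :
    IsStrictlyPositive (ι v) :=
  (hv.isUnit.map ι).isStrictlyPositive (map_nonneg ι hv.nonneg)

lemma norm_map_imResolvent_le (hq : IsStrictlyPositive q) (hY : IsSelfAdjoint Y) (hqv : q ≤ v) :
    ‖η (imResolvent Y (ι v))‖ ≤ ‖η‖ * ‖q⁻¹ʳ‖ := by
  have hv : IsStrictlyPositive v := hq.of_le hqv
  have h_norm : ‖imResolvent Y (ι v)‖ ≤ ‖q⁻¹ʳ‖ :=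
    calc ‖imResolvent Y (ι v)‖ ≤ ‖(ι v)⁻¹ʳ‖ :=
          norm_imResolvent_le hY (isStrictlyPositive_map ι hv)
      _ = ‖ι v⁻¹ʳ‖ := by rw [map_ringInverse_of_isUnit ι hv.isUnit]
      _ ≤ ‖v⁻¹ʳ‖ := NonUnitalStarAlgHom.norm_apply_le ι _
      _ ≤ ‖q⁻¹ʳ‖ := norm_ringInverse_le_of_le hq hqv
  exact η.le_opNorm_of_le h_norm

lemma norm_fixedPointMap_le (hq : IsStrictlyPositive q) (hY : IsSelfAdjoint Y) (hqv : q ≤ v) :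
    ‖fixedPointMap ι η q Y v‖ ≤ ‖q‖ + ‖η‖ * ‖q⁻¹ʳ‖ :=
  norm_add_le_of_le le_rfl (norm_map_imResolvent_le hq hY hqv)

lemma map_imResolvent_nonneg (hη : Monotone η) (hY : IsSelfAdjoint Y) (hv : IsStrictlyPositive v) :
    0 ≤ η (imResolvent Y (ι v)) :=
  (monotone_iff_map_nonneg η).1 hη _ (imResolvent_nonneg hY (isStrictlyPositive_map ι hv))

lemma le_fixedPointMap (hη : Monotone η) (hY : IsSelfAdjoint Y) (hv : IsStrictlyPositive v) :
    q ≤ fixedPointMap ι η q Y v :=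
  le_add_of_nonneg_right (map_imResolvent_nonneg hη hY hv)

lemma map_imResolvent_le_smul (hη : Monotone η) (hq : IsStrictlyPositive q)
    (hY : IsSelfAdjoint Y) (hqv : q ≤ v) :
    η (imResolvent Y (ι v)) ≤ (‖η‖ * ‖q⁻¹ʳ‖ ^ 2) • q := by
  have h_nonneg := map_imResolvent_nonneg (ι := ι) hη hY (hq.of_le hqv)
  calc η (imResolvent Y (ι v)) ≤ (‖η (imResolvent Y (ι v))‖ * ‖q⁻¹ʳ‖) • q :=
        le_norm_mul_norm_ringInverse_smul (.of_nonneg h_nonneg) hq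
    _ ≤ (‖η‖ * ‖q⁻¹ʳ‖ * ‖q⁻¹ʳ‖) • q := smul_le_smul_of_nonneg_right
        (mul_le_mul_of_nonneg_right (norm_map_imResolvent_le hq hY hqv) (norm_nonneg _)) hq.nonneg
    _ = (‖η‖ * ‖q⁻¹ʳ‖ ^ 2) • q := by rw [mul_assoc, ← sq]

lemma ThompsonClose.fixedPointMap {t : ℝ} (hη : Monotone η) (hq : IsStrictlyPositive q)
    (hY : IsSelfAdjoint Y) (ht : 1 ≤ t) (hv : q ≤ v) (hw : q ≤ w) (h : ThompsonClose t v w) :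
    ThompsonClose ((1 + t * (‖η‖ * ‖q⁻¹ʳ‖ ^ 2)) / (1 + ‖η‖ * ‖q⁻¹ʳ‖ ^ 2))
      (fixedPointMap ι η q Y v) (fixedPointMap ι η q Y w) := by
  have h_map : ThompsonClose t (ι v) (ι w) :=
    h.map (f := (ι : B →ₗ[ℂ] A)) (OrderHomClass.mono ι)
  have h_im := h_map.imResolvent hY (by positivity) (isStrictlyPositive_map ι (hq.of_le hv))
    (isStrictlyPositive_map ι (hq.of_le hw))
  exact (h_im.map (f := (η : A →ₗ[ℂ] B)) hη).const_add ht (by positivity)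
    (map_imResolvent_le_smul hη hq hY hv) (map_imResolvent_le_smul hη hq hY hw)

lemma thompsonClose_of_isFixedPt {δ : ℝ} (hη : Monotone η) (hq : IsStrictlyPositive q)
    (hY : IsSelfAdjoint Y) (hv : q ≤ v) (hw : q ≤ w)
    (h_fix : Function.IsFixedPt (fixedPointMap ι η q Y) v) (hδ : 0 ≤ δ)
    (hδM : δ * (‖η‖ * ‖q⁻¹ʳ‖ ^ 2) < 1)
    (h_close : ThompsonClose (1 + δ) (fixedPointMap ι η q Y w) w) :
    ThompsonClose ((1 + δ) / (1 - δ * (‖η‖ * ‖q⁻¹ʳ‖ ^ 2))) v w := by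
  refine .of_contraction (hq.of_le hv).nonneg (hq.of_le hw).nonneg (by positivity) hδ hδM
    ⟨_, le_add_of_nonneg_right (by positivity), .of_le hq hv hw⟩ fun t ht h ↦ ?_
  have h_image := h.fixedPointMap (ι := ι) hη hq hY ht hv hw
  rw [h_fix] at h_image
  rw [mul_comm]
  exact h_image.trans (by positivity) (by positivity) h_close

lemma norm_sub_le_of_isFixedPt {δ : ℝ} (hη : Monotone η) (hq : IsStrictlyPositive q)
    (hY : IsSelfAdjoint Y) (hv : q ≤ v) (hw : q ≤ w)
    (h_fix : Function.IsFixedPt (fixedPointMap ι η q Y) v)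
    (hwK : ‖w‖ ≤ ‖q‖ + ‖η‖ * ‖q⁻¹ʳ‖)
    (hδ : ‖fixedPointMap ι η q Y w - w‖ * ‖q⁻¹ʳ‖ = δ) (hδM : δ * (‖η‖ * ‖q⁻¹ʳ‖ ^ 2) < 1) :
    ‖v - w‖ ≤ ((1 + δ) / (1 - δ * (‖η‖ * ‖q⁻¹ʳ‖ ^ 2)) - 1) * (‖q‖ + ‖η‖ * ‖q⁻¹ʳ‖) := by
  have hδ_nonneg : 0 ≤ δ := hδ ▸ by positivity
  have h_image : ThompsonClose (1 + δ) (fixedPointMap ι η q Y w) w :=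
    hδ ▸ .of_le hq (le_fixedPointMap hη hY (hq.of_le hw)) hw
  have h_ratio : 1 ≤ (1 + δ) / (1 - δ * (‖η‖ * ‖q⁻¹ʳ‖ ^ 2)) := by
    rw [one_le_div (sub_pos.2 hδM)]
    have : 0 ≤ δ * (‖η‖ * ‖q⁻¹ʳ‖ ^ 2) := by positivity
    linarith
  exact (thompsonClose_of_isFixedPt hη hq hY hv hw h_fix hδ_nonneg hδM h_image).norm_sub_le
    (hq.of_le hv).nonneg (hq.of_le hw).nonneg h_ratio
    (h_fix ▸ norm_fixedPointMap_le hq hY hv) hwK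

lemma continuousAt_fixedPointMap (hY : IsSelfAdjoint Y) (hv : IsStrictlyPositive v) :
    ContinuousAt (fun Z ↦ fixedPointMap ι η q Z v) Y :=
  continuousAt_const.add
    (η.continuous.continuousAt.comp (continuousAt_imResolvent hY (isStrictlyPositive_map ι hv)))

theorem vq_continuous_and_bounded_general {P : Type*} [TopologicalSpace P] {S : Set P} {Y : P → A}
    {v : P → B} (hη : Monotone η) (hq : IsStrictlyPositive q) (hY_cont : ContinuousOn Y S)
    (hY : ∀ p ∈ S, IsSelfAdjoint (Y p)) (hv : ∀ p ∈ S, IsStrictlyPositive (v p))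
    (h_fix : ∀ p ∈ S, Function.IsFixedPt (fixedPointMap ι η q (Y p)) (v p)) :
    ContinuousOn v S ∧ ∀ p ∈ S, ‖v p‖ ≤ ‖q‖ + ‖η‖ * ‖q⁻¹ʳ‖ := by
  have h_ge (p) (hp : p ∈ S) : q ≤ v p :=
    (le_fixedPointMap hη (hY p hp) (hv p hp)).trans_eq (h_fix p hp)
  have h_bound (p) (hp : p ∈ S) : ‖v p‖ ≤ ‖q‖ + ‖η‖ * ‖q⁻¹ʳ‖ :=
    h_fix p hp ▸ norm_fixedPointMap_le hq (hY p hp) (h_ge p hp)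
  refine ⟨fun p₀ hp₀ ↦ ?_, h_bound⟩
  set M : ℝ := ‖η‖ * ‖q⁻¹ʳ‖ ^ 2
  let δ (p : P) : ℝ := ‖fixedPointMap ι η q (Y p) (v p₀) - v p₀‖ * ‖q⁻¹ʳ‖
  have h_map : Tendsto (fun p ↦ fixedPointMap ι η q (Y p) (v p₀)) (𝓝[S] p₀) (𝓝 (v p₀)) := by
    simpa only [ContinuousWithinAt, Function.comp_def, (h_fix p₀ hp₀).eq] using
      (continuousAt_fixedPointMap (ι := ι) (η := η) (q := q) (hY p₀ hp₀)
        (hv p₀ hp₀)).comp_continuousWithinAt (hY_cont p₀ hp₀)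
  have hδ : Tendsto δ (𝓝[S] p₀) (𝓝 0) := by
    simpa only [zero_mul] using (tendsto_iff_norm_sub_tendsto_zero.1 h_map).mul_const ‖q⁻¹ʳ‖
  have hδM : ∀ᶠ p in 𝓝[S] p₀, δ p * M < 1 :=
    (hδ.mul_const M).eventually_lt_const (by rw [zero_mul]; exact one_pos)
  have h_dist : ∀ᶠ p in 𝓝[S] p₀,
      ‖v p - v p₀‖ ≤ ((1 + δ p) / (1 - δ p * M) - 1) * (‖q‖ + ‖η‖ * ‖q⁻¹ʳ‖) := by
    filter_upwards [hδM, self_mem_nhdsWithin] with p hpM hp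
    exact norm_sub_le_of_isFixedPt hη hq (hY p hp) (h_ge p hp) (h_ge p₀ hp₀) (h_fix p hp)
      (h_bound p₀ hp₀) rfl hpM
  exact tendsto_iff_norm_sub_tendsto_zero.2
    (squeeze_zero' (.of_forall fun _ ↦ norm_nonneg _) h_dist
      (tendsto_one_add_div_one_sub_sub_one_mul hδ M _))

end FixedPoint

/-- boundedness-and-continuity part of Proposition 3.1: the map
`u ↦ v_q(u)` sending a selfadjoint `u ∈ B` to the unique strictly positive solution of
`v = q + η(((X−u)v⁻¹(X−u)+v)⁻¹)` is norm-continuous on the selfadjoint part of `B`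
and satisfies `‖v_q(u)‖ ≤ ‖q‖ + ‖η‖·‖q⁻¹‖`. -/
theorem vq_continuous_and_bounded
    {A B : Type*} [CStarAlgebra A] [PartialOrder A] [StarOrderedRing A]
    [CStarAlgebra B] [PartialOrder B] [StarOrderedRing B]
    (ι : B →⋆ₐ[ℂ] A) (hι : Function.Injective ι)
    (X : A) (hX : IsSelfAdjoint X)
    (η : A →L[ℂ] B) (hη : ∀ a : A, 0 ≤ a → 0 ≤ η a)
    (q : B) (hq : SPos q)
    (vq : B → B)
    (hfix : ∀ u : B, IsSelfAdjoint u → SPos (vq u) ∧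
      vq u = q + η (Ring.inverse
        ((X - ι u) * Ring.inverse (ι (vq u)) * (X - ι u) + ι (vq u))))
    (huniq : ∀ u : B, IsSelfAdjoint u → ∀ v : B, SPos v →
      v = q + η (Ring.inverse ((X - ι u) * Ring.inverse (ι v) * (X - ι u) + ι v)) →
      v = vq u) :
    ContinuousOn vq {u : B | IsSelfAdjoint u} ∧
    ∀ u : B, IsSelfAdjoint u → ‖vq u‖ ≤ ‖q‖ + ‖η‖ * ‖Ring.inverse q‖ := by
  have hY (u : B) (hu : IsSelfAdjoint u) : IsSelfAdjoint (X - ι u) := hX.sub (hu.map ι)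
  exact vq_continuous_and_bounded_general (S := {u | IsSelfAdjoint u}) (Y := fun u ↦ X - ι u)
    ((monotone_iff_map_nonneg η).2 hη) (sPos_iff_isStrictlyPositive.1 hq)
    (by fun_prop) hY (fun u hu ↦ sPos_iff_isStrictlyPositive.1 (hfix u hu).1)
    (fun u hu ↦ (hfix u hu).2.symm)
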